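/- arXiv:2501.16520 — 2 statements merged into one kernel-verified Lean document; each statement's English description precedes it below -/
import Mathlib

section
/- Fix (x,y) ∈ ℝⁿ × ℝᵐ and α > 0, and suppose ∇²_{yy} g(x,y) ⪰ μ_g I with μ_g > 0. Then the pair (u*, v*) given by u* = −∇_x f(x,y) − ∇²_{yx} g(x,y)ᵀ λ and v* = −∇_y f(x,y) − ∇²_{yy} g(x,y) λ, with λ = −(∇²_{yx} g ∇²_{yx} gᵀ + (∇²_{yy} g)²)⁻¹ (∇²_{yx} g ∇_x f + ∇²_{yy} g ∇_y f − α ∇_y g) (all evaluated at (x,y)), is the unique minimizer of QP (SF); in particular (u*, v*) satisfies the equality constraint of QP (SF) and ½‖u* + ∇_x f‖² + ½‖v* + ∇_y f‖² ≤ ½‖u + ∇_x f‖² + ½‖v + ∇_y f‖² for every feasible (u,v). -/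
open Set MeasureTheory
open scoped NNReal RealInnerProductSpace

noncomputable section

/-- `Vec k` is the Euclidean space `ℝ^k`. -/
abbrev Vec (k : ℕ) : Type := EuclideanSpace ℝ (Fin k)

/-- Partial gradient of `f(x, y)` with respect to `x`. -/
noncomputable def gradx {n m : ℕ} (f : Vec n → Vec m → ℝ) (x : Vec n) (y : Vec m) : Vec n :=
  gradient (fun x' => f x' y) x

/-- Partial gradient of `f(x, y)` with respect to `y`. -/
noncomputable def grady {n m : ℕ} (f : Vec n → Vec m → ℝ) (x : Vec n) (y : Vec m) : Vec m :=
  gradient (fun y' => f x y') y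

/-!
Write `A = ∇²_{yx} g`, `B = ∇²_{yy} g`, `p = ∇ₓ f`, `q = ∇_y f` and `c = α ∇_y g`. The problem (SF)
projects `(-p, -q)` onto the affine subspace `A u + B v + c = 0`, whose direction `ker (A, B)` is
orthogonal to every `(A† λ, B† λ)`. Hence, by Pythagoras, a feasible point of the form
`(-p - A† λ, -q - B† λ)` beats any other feasible point by half their squared distance, and
feasibility of such a point is the linear system `(A A† + B B†) λ = -(A p + B q - c)`. The Hessian
`B` is symmetric, so `B B† = B²`.
-/

section Hessian

variable {F : Type*} [NormedAddCommGroup F] [InnerProductSpace ℝ F] [CompleteSpace F]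

theorem isSelfAdjoint_of_hasFDerivAt_gradient {φ : F → ℝ} {y : F} {H : F →L[ℝ] F}
    (hφ : ∀ᶠ z in nhds y, DifferentiableAt ℝ φ z) (hH : HasFDerivAt (gradient φ) H y) :
    IsSelfAdjoint H := by
  have hφ' : ∀ᶠ z in nhds y, HasFDerivAt φ (innerSL ℝ (gradient φ z)) z :=
    hφ.mono fun z hz => hz.hasGradientAt.hasFDerivAt
  have hφ'' : HasFDerivAt (fun z => innerSL ℝ (gradient φ z)) ((innerSL ℝ).comp H) y :=
    (innerSL ℝ (E := F)).hasFDerivAt.comp y hH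
  refine ContinuousLinearMap.isSelfAdjoint_iff_isSymmetric.mpr fun a b => ?_
  calc ⟪H a, b⟫ = ⟪H b, a⟫ := second_derivative_symmetric_of_eventually hφ' hφ'' a b
    _ = ⟪a, H b⟫ := real_inner_comm _ _

end Hessian

section LinearConstraint

open ContinuousLinearMap (adjoint)

variable {𝕜 E F G : Type*} [RCLike 𝕜]
  [NormedAddCommGroup E] [InnerProductSpace 𝕜 E] [CompleteSpace E]
  [NormedAddCommGroup F] [InnerProductSpace 𝕜 F] [CompleteSpace F]
  [NormedAddCommGroup G] [InnerProductSpace 𝕜 G] [CompleteSpace G]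
  {A : E →L[𝕜] G} {B : F →L[𝕜] G}

theorem inner_adjoint_add_inner_adjoint_eq_zero {w : E} {z : F} (h : A w + B z = 0) (l : G) :
    inner 𝕜 w (adjoint A l) + inner 𝕜 z (adjoint B l) = 0 := by
  rw [ContinuousLinearMap.adjoint_inner_right, ContinuousLinearMap.adjoint_inner_right,
    ← inner_add_left, h, inner_zero_left]

theorem norm_sub_adjoint_sq_add_norm_sub_adjoint_sq {w : E} {z : F} (h : A w + B z = 0) (l : G) :
    ‖w - adjoint A l‖ ^ 2 + ‖z - adjoint B l‖ ^ 2 =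
      ‖adjoint A l‖ ^ 2 + ‖adjoint B l‖ ^ 2 + (‖w‖ ^ 2 + ‖z‖ ^ 2) := by
  have horth : RCLike.re (inner 𝕜 w (adjoint A l)) + RCLike.re (inner 𝕜 z (adjoint B l)) = 0 := by
    rw [← map_add, inner_adjoint_add_inner_adjoint_eq_zero h, map_zero]
  rw [norm_sub_sq (𝕜 := 𝕜), norm_sub_sq (𝕜 := 𝕜)]
  linarith

variable {p u u₀ : E} {q v v₀ : F} {c l : G}

theorem map_add_map_add_eq_zero_of_normal_equation
    (hl : (A ∘L adjoint A + B ∘L adjoint B) l = -(A p + B q - c))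
    (hu₀ : u₀ = -p - adjoint A l) (hv₀ : v₀ = -q - adjoint B l) :
    A u₀ + B v₀ + c = 0 := by
  calc A u₀ + B v₀ + c
      = -(A p + B q - c) - (A ∘L adjoint A + B ∘L adjoint B) l := by
        simp only [hu₀, hv₀, map_sub, map_neg, add_apply,
          ContinuousLinearMap.comp_apply]
        abel
    _ = 0 := by rw [hl, sub_self]

theorem norm_add_sq_add_norm_add_sq_of_feasible
    (hu₀ : u₀ = -p - adjoint A l) (hv₀ : v₀ = -q - adjoint B l)
    (h₀ : A u₀ + B v₀ + c = 0) (h : A u + B v + c = 0) :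
    ‖u + p‖ ^ 2 + ‖v + q‖ ^ 2 =
      ‖u₀ + p‖ ^ 2 + ‖v₀ + q‖ ^ 2 + (‖u - u₀‖ ^ 2 + ‖v - v₀‖ ^ 2) := by
  have hker : A (u - u₀) + B (v - v₀) = 0 := by
    rw [map_sub, map_sub, sub_add_sub_comm, sub_eq_zero]
    exact add_right_cancel (h.trans h₀.symm)
  have hAl : adjoint A l = -(u₀ + p) := by rw [hu₀]; abel
  have hBl : adjoint B l = -(v₀ + q) := by rw [hv₀]; abel
  simpa only [hAl, hBl, sub_neg_eq_add, ← add_assoc, sub_add_cancel, norm_neg] using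
    norm_sub_adjoint_sq_add_norm_sub_adjoint_sq hker l

theorem stmt_3_general
    (hl : (A ∘L adjoint A + B ∘L adjoint B) l = -(A p + B q - c))
    (hu₀ : u₀ = -p - adjoint A l) (hv₀ : v₀ = -q - adjoint B l) :
    (A u₀ + B v₀ + c = 0) ∧
    (∀ u v, A u + B v + c = 0 →
      (1:ℝ)/2 * ‖u₀ + p‖ ^ 2 + (1:ℝ)/2 * ‖v₀ + q‖ ^ 2
        ≤ (1:ℝ)/2 * ‖u + p‖ ^ 2 + (1:ℝ)/2 * ‖v + q‖ ^ 2) ∧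
    (∀ u v, A u + B v + c = 0 →
      (1:ℝ)/2 * ‖u + p‖ ^ 2 + (1:ℝ)/2 * ‖v + q‖ ^ 2
        ≤ (1:ℝ)/2 * ‖u₀ + p‖ ^ 2 + (1:ℝ)/2 * ‖v₀ + q‖ ^ 2 →
      u = u₀ ∧ v = v₀) := by
  have feasible := map_add_map_add_eq_zero_of_normal_equation hl hu₀ hv₀
  have excess {u : E} {v : F} (h : A u + B v + c = 0) :=
    norm_add_sq_add_norm_add_sq_of_feasible hu₀ hv₀ feasible h
  refine ⟨feasible, fun u v h => ?_, fun u v h hle => ?_⟩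
  · linarith [excess h, sq_nonneg ‖u - u₀‖, sq_nonneg ‖v - v₀‖]
  · have hdist : ‖u - u₀‖ ^ 2 + ‖v - v₀‖ ^ 2 = 0 :=
      le_antisymm (by linarith [excess h]) (by positivity)
    simpa [add_eq_zero_iff_of_nonneg, sub_eq_zero] using hdist

end LinearConstraint

/-- at a fixed point `(x,y)` with `∇²_{yy} g(x,y) ⪰ μ_g I`, the pair
`(u*, v*) = (−∇ₓf − (∇²_{yx}g)ᵀ λ, −∇_y f − ∇²_{yy}g λ)` with
`λ = −(∇²_{yx}g (∇²_{yx}g)ᵀ + (∇²_{yy}g)²)⁻¹ (∇²_{yx}g ∇ₓf + ∇²_{yy}g ∇_y f − α ∇_y g)`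
is the unique minimizer of the QP (SF). -/
theorem stmt_3 {n m : ℕ} (f g : Vec n → Vec m → ℝ)
    (hf : ContDiff ℝ 1 (Function.uncurry f))
    (hg : ContDiff ℝ 2 (Function.uncurry g))
    (Gyx : Vec n → Vec m → Vec n →L[ℝ] Vec m)
    (Gyy : Vec n → Vec m → Vec m →L[ℝ] Vec m)
    (hGyx : ∀ x y, HasFDerivAt (fun x' => grady g x' y) (Gyx x y) x)
    (hGyy : ∀ x y, HasFDerivAt (fun y' => grady g x y') (Gyy x y) y)
    (x : Vec n) (y : Vec m) (α : ℝ) (hα : 0 < α)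
    (μg : ℝ) (hμg : 0 < μg)
    -- `∇²_{yy} g(x,y) ⪰ μ_g I`
    (hpos : ∀ w : Vec m, μg * ‖w‖ ^ 2 ≤ ⟪w, Gyy x y w⟫)
    -- `λ` is the (unique) solution of the linear system defining
    -- `λ = −(∇²_{yx}g (∇²_{yx}g)ᵀ + (∇²_{yy}g)²)⁻¹ (∇²_{yx}g ∇ₓf + ∇²_{yy}g ∇_y f − α ∇_y g)`
    (lam : Vec m)
    (hlam : (Gyx x y ∘L ContinuousLinearMap.adjoint (Gyx x y) + Gyy x y ∘L Gyy x y) lam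
      = -(Gyx x y (gradx f x y) + Gyy x y (grady f x y) - α • grady g x y))
    (ustar : Vec n) (vstar : Vec m)
    (hustar : ustar = -gradx f x y - ContinuousLinearMap.adjoint (Gyx x y) lam)
    (hvstar : vstar = -grady f x y - Gyy x y lam) :
    -- `(u*, v*)` is feasible for QP (SF),
    (Gyx x y ustar + Gyy x y vstar + α • grady g x y = 0) ∧
    -- it minimizes the objective among all feasible points,
    (∀ u v, Gyx x y u + Gyy x y v + α • grady g x y = 0 →
      (1:ℝ)/2 * ‖ustar + gradx f x y‖ ^ 2 + (1:ℝ)/2 * ‖vstar + grady f x y‖ ^ 2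
        ≤ (1:ℝ)/2 * ‖u + gradx f x y‖ ^ 2 + (1:ℝ)/2 * ‖v + grady f x y‖ ^ 2) ∧
    -- and it is the unique such minimizer.
    (∀ u v, Gyx x y u + Gyy x y v + α • grady g x y = 0 →
      (1:ℝ)/2 * ‖u + gradx f x y‖ ^ 2 + (1:ℝ)/2 * ‖v + grady f x y‖ ^ 2
        ≤ (1:ℝ)/2 * ‖ustar + gradx f x y‖ ^ 2 + (1:ℝ)/2 * ‖vstar + grady f x y‖ ^ 2 →
      u = ustar ∧ v = vstar) := by
  have hself : IsSelfAdjoint (Gyy x y) := isSelfAdjoint_of_hasFDerivAt_gradient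
    (.of_forall ((hg.differentiable two_ne_zero).comp (by fun_prop : Differentiable ℝ (x, ·))))
    (hGyy x y)
  exact stmt_3_general (by rwa [hself.adjoint_eq]) hustar (by rwa [hself.adjoint_eq])

end
end

section
/- Suppose Assumption A2 holds. Then for every (x,y) ∈ ℝⁿ × ℝᵐ and all α, ε > 0, the QP (RXSF) at (x,y) is feasible, i.e., there exists (u,v) ∈ ℝⁿ × ℝᵐ with ∇_x h(x,y)ᵀ u + ∇_y h(x,y)ᵀ v + α(h(x,y) − ε²) ≤ 0: if h(x,y) ≤ ε² then (u,v) = (0,0) is feasible, and otherwise (u,v) = (0, −(α(h(x,y) − ε²)/(∇_y h(x,y)ᵀ ∇_y g(x,y))) ∇_y g(x,y)) is feasible (note ∇_y h(x,y)ᵀ ∇_y g(x,y) ≥ 2 μ_g ‖∇_y g(x,y)‖² > 0 when h(x,y) > ε²). -/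
open Set MeasureTheory
open scoped NNReal RealInnerProductSpace

noncomputable section

/-- The compact constraint function `h(x,y) = ‖∇_y g(x,y)‖²`. -/
noncomputable def hbar {n m : ℕ} (g : Vec n → Vec m → ℝ) (x : Vec n) (y : Vec m) : ℝ :=
  ‖grady g x y‖ ^ 2

/-!
Take the direction `v = ∇_y g(x, y)`. Differentiating the squared norm gives
`⟪∇_y h, v⟫ = 2 ⟪∇²_{yy} g v, v⟫`, and strong convexity bounds the Hessian below by `μ_g`. Hence
`⟪∇_y h, v⟫ > 0` as soon as `v ≠ 0`, in particular when `h = ‖v‖² > ε²`, and the linearized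
constraint, being affine along `v` with nonzero slope, vanishes at the prescribed multiple of `v`.
-/

section

open Filter
open scoped Gradient Topology

section UniformConvexity

variable {E : Type*} [NormedAddCommGroup E] [NormedSpace ℝ E] {s : Set E} {φ : ℝ → ℝ} {f : E → ℝ}

theorem apply_sub_add_modulus_le_of_uniformConvexOn (hf : UniformConvexOn s φ f)
    {f' : StrongDual ℝ E} {x y : E} (hx : x ∈ s) (hy : y ∈ s) (hf' : HasFDerivWithinAt f f' s x) :
    f' (y - x) + φ ‖y - x‖ ≤ f y - f x := by
  have hmaps : MapsTo (AffineMap.lineMap x y : ℝ → E) (Icc 0 1) s :=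
    fun t ht ↦ hf.1.lineMap_mem hx hy ht
  have hderiv : HasDerivWithinAt (fun t : ℝ ↦ f (AffineMap.lineMap x y t)) (f' (y - x))
      (Icc 0 1) 0 :=
    hf'.comp_hasDerivWithinAt_of_eq 0 AffineMap.hasDerivWithinAt_lineMap hmaps (by simp)
  have hslope := (hasDerivWithinAt_iff_tendsto_slope' self_notMem_Ioi).1
    (hderiv.mono_of_mem_nhdsWithin (Icc_mem_nhdsGT zero_lt_one))
  have hbound : Tendsto (fun t : ℝ ↦ f y - f x - (1 - t) * φ ‖y - x‖) (𝓝[>] 0)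
      (𝓝 (f y - f x - φ ‖y - x‖)) :=
    tendsto_nhdsWithin_of_tendsto_nhds (Continuous.tendsto' (by fun_prop) _ _ (by simp))
  refine le_sub_iff_add_le.1 (le_of_tendsto_of_tendsto hslope hbound ?_)
  filter_upwards [Ioo_mem_nhdsGT (zero_lt_one' ℝ)] with t ⟨ht₀, ht₁⟩
  have hconv := hf.2 hx hy (sub_nonneg.2 ht₁.le) ht₀.le (sub_add_cancel 1 t)
  rw [← AffineMap.lineMap_apply_module, norm_sub_rev] at hconv
  simp only [smul_eq_mul] at hconv
  rw [slope_def_field, AffineMap.lineMap_apply_zero, sub_zero, div_le_iff₀ ht₀]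
  linarith

theorem two_mul_modulus_le_sub_apply_of_uniformConvexOn (hf : UniformConvexOn s φ f)
    {f'x f'y : StrongDual ℝ E} {x y : E} (hx : x ∈ s) (hy : y ∈ s)
    (hf'x : HasFDerivWithinAt f f'x s x) (hf'y : HasFDerivWithinAt f f'y s y) :
    2 * φ ‖y - x‖ ≤ (f'y - f'x) (y - x) := by
  have hxy := apply_sub_add_modulus_le_of_uniformConvexOn hf hx hy hf'x
  have hyx := apply_sub_add_modulus_le_of_uniformConvexOn hf hy hx hf'y
  rw [← neg_sub y x, map_neg, norm_neg] at hyx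
  rw [sub_apply]
  linarith

end UniformConvexity

section StrongConvexity

variable {E : Type*} [NormedAddCommGroup E] [InnerProductSpace ℝ E] {μ : ℝ} {y : E}

theorem mul_norm_sq_le_inner_of_hasFDerivAt {F : E → E} {F' : E →L[ℝ] E}
    (hF : ∀ᶠ z in 𝓝 y, μ * ‖z - y‖ ^ 2 ≤ ⟪F z - F y, z - y⟫) (hF' : HasFDerivAt F F' y) (p : E) :
    μ * ‖p‖ ^ 2 ≤ ⟪F' p, p⟫ := by
  have hslope : Tendsto (fun t : ℝ ↦ ⟪t⁻¹ • (F (y + t • p) - F y), p⟫) (𝓝[>] 0) (𝓝 ⟪F' p, p⟫) :=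
    (hF'.hasLineDerivAt p).tendsto_slope_zero_right.inner tendsto_const_nhds
  have hline : Tendsto (fun t : ℝ ↦ y + t • p) (𝓝[>] 0) (𝓝 y) :=
    tendsto_nhdsWithin_of_tendsto_nhds (Continuous.tendsto' (by fun_prop) _ _ (by simp))
  refine ge_of_tendsto hslope ?_
  filter_upwards [hline.eventually hF, self_mem_nhdsWithin] with t hmono (ht : 0 < t)
  rw [add_sub_cancel_left, norm_smul, mul_pow, Real.norm_eq_abs, sq_abs, inner_smul_right] at hmono
  rw [real_inner_smul_left, le_inv_mul_iff₀ ht]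
  refine le_of_mul_le_mul_left ?_ ht
  linarith

variable [CompleteSpace E]

theorem mul_norm_sub_sq_le_inner_gradient_sub_of_strongConvexOn {s : Set E} {f : E → ℝ}
    (hf : StrongConvexOn s μ f) {x : E} (hx : x ∈ s) (hy : y ∈ s) (hfx : DifferentiableAt ℝ f x)
    (hfy : DifferentiableAt ℝ f y) :
    μ * ‖y - x‖ ^ 2 ≤ ⟪∇ f y - ∇ f x, y - x⟫ := by
  have hmono := two_mul_modulus_le_sub_apply_of_uniformConvexOn hf hx hy
    hfx.hasFDerivAt.hasFDerivWithinAt hfy.hasFDerivAt.hasFDerivWithinAt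
  rw [inner_sub_left, inner_gradient_left, inner_gradient_left, ← sub_apply]
  linarith

theorem mul_norm_sq_le_inner_hessian_of_strongConvexOn {s : Set E} {f : E → ℝ} (hs : s ∈ 𝓝 y)
    (hf : StrongConvexOn s μ f) (hdiff : DifferentiableOn ℝ f s) {H : E →L[ℝ] E}
    (hH : HasFDerivAt (∇ f) H y) (p : E) :
    μ * ‖p‖ ^ 2 ≤ ⟪H p, p⟫ := by
  refine mul_norm_sq_le_inner_of_hasFDerivAt ?_ hH p
  filter_upwards [eventually_mem_nhds_iff.2 hs] with z hz
  exact mul_norm_sub_sq_le_inner_gradient_sub_of_strongConvexOn hf (mem_of_mem_nhds hs)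
    (mem_of_mem_nhds hz) (hdiff.differentiableAt hs) (hdiff.differentiableAt hz)

theorem hasGradientAt_norm_sq_of_hasFDerivAt {E' : Type*} [NormedAddCommGroup E']
    [InnerProductSpace ℝ E'] [CompleteSpace E'] {F : E → E'} {F' : E →L[ℝ] E'}
    (hF : HasFDerivAt F F' y) :
    HasGradientAt (fun z ↦ ‖F z‖ ^ 2) ((2 : ℝ) • F'.adjoint (F y)) y := by
  rw [hasGradientAt_iff_hasFDerivAt]
  refine hF.norm_sq.congr_fderiv ?_
  ext p
  simp [ContinuousLinearMap.adjoint_inner_left]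

theorem two_mul_mul_norm_sq_le_inner_gradient_norm_sq_gradient {s : Set E} {f : E → ℝ}
    (hs : s ∈ 𝓝 y) (hf : StrongConvexOn s μ f) (hdiff : DifferentiableOn ℝ f s)
    (hdiff₂ : DifferentiableAt ℝ (∇ f) y) :
    2 * μ * ‖∇ f y‖ ^ 2 ≤ ⟪∇ (fun z ↦ ‖∇ f z‖ ^ 2) y, ∇ f y⟫ := by
  have hhess :=
    mul_norm_sq_le_inner_hessian_of_strongConvexOn hs hf hdiff hdiff₂.hasFDerivAt (∇ f y)
  rw [(hasGradientAt_norm_sq_of_hasFDerivAt hdiff₂.hasFDerivAt).gradient, real_inner_smul_left,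
    ContinuousLinearMap.adjoint_inner_left, real_inner_comm]
  linarith

end StrongConvexity

section Feasibility

variable {E F : Type*} [NormedAddCommGroup E] [InnerProductSpace ℝ E] [CompleteSpace E]
  [NormedAddCommGroup F] [InnerProductSpace ℝ F] [CompleteSpace F]
  {g : E → F → ℝ} {x : E} {y : F} {α ε : ℝ}

/-- The function `h(x, y) = ‖∇_y g(x, y)‖²` on arbitrary real Hilbert spaces; on `ℝⁿ × ℝᵐ` it is
definitionally `hbar g`. -/
def gradNormSq (g : E → F → ℝ) (x : E) (y : F) : ℝ :=
  ‖∇ (g x) y‖ ^ 2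

/-- The left-hand side `⟪∇_x h, u⟫ + ⟪∇_y h, v⟫ + α (h - ε²)` of the constraint of the QP (RXSF) at
`(x, y)`, where `h = gradNormSq g`; the pair `(u, v)` is feasible when it is nonpositive. -/
def rxsfConstraint (g : E → F → ℝ) (x : E) (y : F) (α ε : ℝ) (u : E) (v : F) : ℝ :=
  ⟪∇ (fun x' ↦ gradNormSq g x' y) x, u⟫ + ⟪∇ (gradNormSq g x) y, v⟫ + α * (gradNormSq g x y - ε ^ 2)

theorem rxsfConstraint_zero_zero_nonpos (hα : 0 ≤ α) (h : gradNormSq g x y ≤ ε ^ 2) :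
    rxsfConstraint g x y α ε 0 0 ≤ 0 := by
  simpa only [rxsfConstraint, inner_zero_right, zero_add] using
    mul_nonpos_of_nonneg_of_nonpos hα (sub_nonpos.2 h)

theorem rxsfConstraint_zero_neg_div_smul {v : F} (hv : ⟪∇ (gradNormSq g x) y, v⟫ ≠ 0) :
    rxsfConstraint g x y α ε 0
      (-(α * (gradNormSq g x y - ε ^ 2) / ⟪∇ (gradNormSq g x) y, v⟫) • v) = 0 := by
  rw [rxsfConstraint, inner_zero_right, zero_add, real_inner_smul_right, neg_mul,
    div_mul_cancel₀ _ hv, neg_add_cancel]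

theorem stmt_12_general {s : Set F} {μ : ℝ} (hs : s ∈ 𝓝 y) (hsc : StrongConvexOn s μ (g x))
    (hdiff : DifferentiableOn ℝ (g x) s) (hdiff₂ : DifferentiableAt ℝ (∇ (g x)) y)
    (hμ : 0 < μ) (hα : 0 ≤ α) :
    (∃ u v, rxsfConstraint g x y α ε u v ≤ 0) ∧
    (gradNormSq g x y ≤ ε ^ 2 → rxsfConstraint g x y α ε 0 0 ≤ 0) ∧
    (ε ^ 2 < gradNormSq g x y →
      0 < ⟪∇ (gradNormSq g x) y, ∇ (g x) y⟫ ∧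
      2 * μ * ‖∇ (g x) y‖ ^ 2 ≤ ⟪∇ (gradNormSq g x) y, ∇ (g x) y⟫ ∧
      rxsfConstraint g x y α ε 0
        (-(α * (gradNormSq g x y - ε ^ 2) / ⟪∇ (gradNormSq g x) y, ∇ (g x) y⟫) • ∇ (g x) y)
        ≤ 0) := by
  have hlower : 2 * μ * ‖∇ (g x) y‖ ^ 2 ≤ ⟪∇ (gradNormSq g x) y, ∇ (g x) y⟫ :=
    two_mul_mul_norm_sq_le_inner_gradient_norm_sq_gradient hs hsc hdiff hdiff₂
  have hpos (h : ε ^ 2 < gradNormSq g x y) : 0 < ⟪∇ (gradNormSq g x) y, ∇ (g x) y⟫ :=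
    (mul_pos (mul_pos two_pos hμ) ((sq_nonneg ε).trans_lt h)).trans_le hlower
  refine ⟨?_, rxsfConstraint_zero_zero_nonpos hα, fun h ↦
    ⟨hpos h, hlower, (rxsfConstraint_zero_neg_div_smul (hpos h).ne').le⟩⟩
  rcases le_or_gt (gradNormSq g x y) (ε ^ 2) with h | h
  · exact ⟨0, 0, rxsfConstraint_zero_zero_nonpos hα h⟩
  · exact ⟨0, _, (rxsfConstraint_zero_neg_div_smul (hpos h).ne').le⟩

end Feasibility

end

/-- under Assumption A2, the QP (RXSF) is always feasible: if `h(x,y) ≤ ε²` then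
`(0,0)` is feasible, and otherwise `(0, −(α(h−ε²)/(∇_y hᵀ ∇_y g)) ∇_y g)` is feasible (and
`∇_y hᵀ ∇_y g ≥ 2 μ_g ‖∇_y g‖² > 0` in that case). -/
theorem stmt_12 {n m : ℕ} (f g : Vec n → Vec m → ℝ)
    (hf : ContDiff ℝ 1 (Function.uncurry f))
    -- Assumption A2
    (hg : ContDiff ℝ 2 (Function.uncurry g))
    (μg : ℝ) (hμg : 0 < μg)
    (hsc : ∀ x, StrongConvexOn Set.univ μg (g x))
    (Lyyg Lyxg : ℝ≥0)
    (hgyLy : ∀ x, LipschitzWith Lyyg fun y => grady g x y)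
    (hgyLx : ∀ y, LipschitzWith Lyxg fun x => grady g x y)
    (Gyx : Vec n → Vec m → Vec n →L[ℝ] Vec m)
    (Gyy : Vec n → Vec m → Vec m →L[ℝ] Vec m)
    (hGyx : ∀ x y, HasFDerivAt (fun x' => grady g x' y) (Gyx x y) x)
    (hGyy : ∀ x y, HasFDerivAt (fun y' => grady g x y') (Gyy x y) y)
    (Cyxg Cyyg : ℝ≥0)
    (hGyxL : LipschitzWith Cyxg fun p : Vec n × Vec m => Gyx p.1 p.2)
    (hGyyL : LipschitzWith Cyyg fun p : Vec n × Vec m => Gyy p.1 p.2)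
    : ∀ (x : Vec n) (y : Vec m) (α ε : ℝ), 0 < α → 0 < ε →
    -- the QP (RXSF) is feasible,
    (∃ (u : Vec n) (v : Vec m),
      ⟪gradx (hbar g) x y, u⟫ + ⟪grady (hbar g) x y, v⟫ + α * (hbar g x y - ε ^ 2) ≤ 0) ∧
    -- if `h(x,y) ≤ ε²` then `(0,0)` is feasible,
    (hbar g x y ≤ ε ^ 2 →
      ⟪gradx (hbar g) x y, (0 : Vec n)⟫ + ⟪grady (hbar g) x y, (0 : Vec m)⟫
        + α * (hbar g x y - ε ^ 2) ≤ 0) ∧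
    -- and if `h(x,y) > ε²` then `∇_y hᵀ ∇_y g ≥ 2 μ_g ‖∇_y g‖² > 0` and the explicit
    -- pair `(0, −(α(h−ε²)/(∇_y hᵀ ∇_y g)) ∇_y g)` is feasible.
    (ε ^ 2 < hbar g x y →
      (0 < ⟪grady (hbar g) x y, grady g x y⟫ ∧
       2 * μg * ‖grady g x y‖ ^ 2 ≤ ⟪grady (hbar g) x y, grady g x y⟫ ∧
       ⟪gradx (hbar g) x y, (0 : Vec n)⟫
         + ⟪grady (hbar g) x y,
             -(α * (hbar g x y - ε ^ 2) / ⟪grady (hbar g) x y, grady g x y⟫) • grady g x y⟫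
         + α * (hbar g x y - ε ^ 2) ≤ 0)) := by
  intro x y α ε hα _
  have hgx : Differentiable ℝ (g x) :=
    (hg.differentiable two_ne_zero).comp ((differentiable_const x).prodMk differentiable_id)
  exact stmt_12_general Filter.univ_mem (hsc x) hgx.differentiableOn (hGyy x y).differentiableAt
    hμg hα.le

end
end
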